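/- arXiv:1208.0129 — 5 statements merged into one kernel-verified Lean document; each statement's English description precedes it below -/
import Mathlib

section
/- Let λ > 0, let (Rᵢ*)_{i∈ℕ} be a sequence of nonnegative reals with R₁* ≤ B for a constant B < ∞, and let (γ̄ᵢ)_{i∈ℕ} be a strictly increasing sequence of positive reals with γ̄ᵢ → ∞. Let s ∈ ℕ satisfy s ≥ ⌈log(1 + B/γ̄₁)/log(1+λ)⌉ + 2, and for k ∈ {0,…,s−1} let j_{k+1} be the largest index j with γ̄ⱼ ≤ (1+λ)ᵏ·γ̄₁; set J := max{j₁,…,j_s}. Then any index i* minimizing i ↦ Rᵢ* + (1+λ)·γ̄ᵢ over i ∈ ℕ satisfies i* ≤ J. -/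
/-- Lemma 2 (`lemma:finite`) of Agarwal–Bartlett–Duchi: once the grid size `s`
is large enough, any minimizer of the penalized risk `i ↦ Rᵢ* + (1+λ) γ̄ᵢ`
lies below the largest grid index `J = max{j₁,…,j_s}`, where `jⱼ` are the
coarse-grid indices. -/
theorem stmt4 (lam : ℝ) (hlam : 0 < lam) (B : ℝ)
    (Rstar : ℕ → ℝ) (hRnonneg : ∀ i, 0 ≤ Rstar i) (hRB : Rstar 0 ≤ B)
    (γ : ℕ → ℝ) (hpos : ∀ i, 0 < γ i) (hsm : StrictMono γ)
    (hdiv : Filter.Tendsto γ Filter.atTop Filter.atTop)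
    (s : ℕ)
    (hs : ⌈Real.log (1 + B / γ 0) / Real.log (1 + lam)⌉₊ + 2 ≤ s)
    (jj : ℕ → ℕ)
    (hjj : ∀ k < s, γ (jj k) ≤ (1 + lam) ^ k * γ 0 ∧
      ∀ j, γ j ≤ (1 + lam) ^ k * γ 0 → j ≤ jj k)
    (istar : ℕ)
    (hmin : ∀ i : ℕ, Rstar istar + (1 + lam) * γ istar ≤ Rstar i + (1 + lam) * γ i) :
    istar ≤ (Finset.range s).sup jj := by
  have h0 := hpos 0
  have hB : 0 ≤ B := (hRnonneg 0).trans hRB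
  have hq : 0 ≤ B / γ 0 := div_nonneg hB h0.le
  set n := ⌈Real.log (1 + B / γ 0) / Real.log (1 + lam)⌉₊ with hn
  have hlog : 0 < Real.log (1 + lam) := Real.log_pos (by linarith)
  have h1 : Real.log (1 + B / γ 0) / Real.log (1 + lam) ≤ n := Nat.le_ceil _
  rw [div_le_iff₀ hlog, ← Real.log_pow] at h1
  have h2 : 1 + B / γ 0 ≤ (1 + lam) ^ n :=
    (Real.log_le_log_iff (by linarith) (by positivity)).1 h1
  have h3 : γ 0 + B ≤ (1 + lam) ^ n * γ 0 := by
    have h4 := mul_le_mul_of_nonneg_right h2 h0.le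
    have h5 : (1 + B / γ 0) * γ 0 = γ 0 + B := by field_simp
    linarith
  have hns : n < s := by omega
  have h6 : γ istar ≤ γ 0 + B := by
    have h7 := hmin 0
    have h8 := hRnonneg istar
    have h9 : γ 0 ≤ γ istar := hsm.monotone (Nat.zero_le _)
    nlinarith [mul_nonneg hlam.le (sub_nonneg.2 h9)]
  exact ((hjj n hns).2 istar (h6.trans h3)).trans
    (Finset.le_sup (f := jj) (Finset.mem_range.2 hns))
end

section
/- In the nested computationally budgeted model-selection setup specialized to linear classification with nested norm balls—where nᵢ(t) = n·t/d for all i (so n·T/d is the number of samples processable with budget T) and penᵢ(t) = 2rᵢX̄·√(d/(n·t))—assume n·T ≥ d/B and n·T ≥ d/(4r₁²X̄²). Then with probability at least 1 − 2c₁·exp(−m), the output f of the coarse-grid model-selection algorithm satisfies R(f) ≤ inf_{i=1,2,…} { Rᵢ* + √(d·log₂(16B·nT/d)/(nT)) · ( 8rᵢX̄ + √8·c₂·√(m + log log₂(16B·nT/d)) ) }. -/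
open MeasureTheory

set_option maxHeartbeats 2000000

/-- Corollary 1(a) of Agarwal–Bartlett–Duchi: the coarse-grid model-selection
algorithm applied to linear classification with nested norm balls, where every
class processes `nᵢ(t) = n t / d` samples under budget `t` and
`penᵢ(t) = 2 rᵢ X̄ √(d / (n t))`.  Provided `nT ≥ d/B` and
`nT ≥ d/(4 r₁² X̄²)`, with probability at least `1 - 2c₁ exp(-m)` the output
satisfies the stated oracle inequality.  (Classes are indexed by `ℕ`, with
index `0` playing the role of class `1`; budgets and sample sizes are real.) -/
theorem stmt5 {Ω : Type*} [MeasurableSpace Ω] (P : Measure Ω) [IsProbabilityMeasure P]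
    {F : Type*} (𝓕 : ℕ → Set F)
    (hnested : ∀ i j : ℕ, i ≤ j → 𝓕 i ⊆ 𝓕 j)
    (R : F → ℝ) (hRnonneg : ∀ f, 0 ≤ R f)
    (Rstar : ℕ → ℝ) (hRstar : ∀ i, IsGLB (R '' 𝓕 i) (Rstar i))
    (c₁ c₂ : ℝ) (hc₁ : 0 < c₁) (hc₂ : 0 < c₂)
    (m : ℝ) (hm : 0 ≤ m)
    (B : ℝ) (hBpos : 0 < B) (hB : Rstar 0 ≤ B)
    (d n Xbar : ℝ) (hd : 0 < d) (hn : 0 < n) (hX : 0 < Xbar)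
    (r : ℕ → ℝ) (hr0 : 0 < r 0) (hrm : StrictMono r)
    (hrdiv : Filter.Tendsto r Filter.atTop Filter.atTop)
    (T : ℝ) (hT : 0 < T)
    (hT1 : d / B ≤ n * T) (hT2 : d / (4 * (r 0) ^ 2 * Xbar ^ 2) ≤ n * T)
    (nsamp : ℕ → ℝ → ℝ) (hnsamp : ∀ (i : ℕ) (t : ℝ), nsamp i t = n * t / d)
    (pen : ℕ → ℝ → ℝ)
    (hpen : ∀ (i : ℕ) (t : ℝ), pen i t = 2 * r i * Xbar * Real.sqrt (d / (n * t)))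
    (fhat : ℕ → ℝ → Ω → F) (Lhat : ℕ → ℝ → Ω → F → ℝ)
    (hmem : ∀ i t ω, fhat i t ω ∈ 𝓕 i)
    (hERM : ∀ (i : ℕ) (t : ℝ), ∀ᵐ ω ∂P, ∀ f ∈ 𝓕 i,
      Lhat i t ω (fhat i t ω) ≤ Lhat i t ω f + pen i t)
    (hconc1 : ∀ (i : ℕ) (t ε : ℝ), 0 < ε →
      P {ω | pen i t + c₂ * ε < |Lhat i t ω (fhat i t ω) - R (fhat i t ω)|}
        ≤ ENNReal.ofReal (c₁ * Real.exp (-4 * nsamp i t * ε ^ 2)))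
    (hconc2 : ∀ (i : ℕ) (t : ℝ), ∀ f ∈ 𝓕 i, ∀ ε : ℝ, 0 < ε →
      P {ω | c₂ * ε < |Lhat i t ω f - R f|}
        ≤ ENNReal.ofReal (c₁ * Real.exp (-4 * nsamp i t * ε ^ 2)))
    (s : ℕ) (hs : s = ⌈Real.logb 2 (1 + B * (n * T / d))⌉₊ + 2)
    (pbar : ℕ → ℝ)
    (hpbar : ∀ i, pbar i = 2 * pen i (T / s)
      + c₂ * Real.sqrt (2 * (m + Real.log s) / nsamp i (T / s)))
    (jj : ℕ → ℕ)
    (hjj : ∀ k < s, pbar (jj k) ≤ 2 ^ k * pbar 0 ∧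
      ∀ j : ℕ, pbar j ≤ 2 ^ k * pbar 0 → j ≤ jj k)
    (S : Finset ℕ) (hSdef : S = (Finset.range s).image jj)
    (ihat : Ω → ℕ)
    (hihat_mem : ∀ ω, ihat ω ∈ S)
    (hihat_min : ∀ ω, ∀ i ∈ S,
      Lhat (ihat ω) (T / s) ω (fhat (ihat ω) (T / s) ω) + pen (ihat ω) (T / s)
        + c₂ / 2 * Real.sqrt (m / nsamp (ihat ω) (T / s))
        + c₂ / 2 * Real.sqrt (Real.log s / nsamp (ihat ω) (T / s))
      ≤ Lhat i (T / s) ω (fhat i (T / s) ω) + pen i (T / s)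
        + c₂ / 2 * Real.sqrt (m / nsamp i (T / s))
        + c₂ / 2 * Real.sqrt (Real.log s / nsamp i (T / s))) :
    ENNReal.ofReal (1 - 2 * c₁ * Real.exp (-m)) ≤
      P {ω | ∀ i : ℕ, R (fhat (ihat ω) (T / s) ω) ≤
        Rstar i + Real.sqrt (d * Real.logb 2 (16 * B * n * T / d) / (n * T))
          * (8 * r i * Xbar
            + Real.sqrt 8 * c₂
              * Real.sqrt (m + Real.log (Real.logb 2 (16 * B * n * T / d))))} := by
  have hN : 0 < n * T / d := by positivity
  have hs2 : 2 ≤ s := by omega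
  have hsR : (2:ℝ) ≤ s := by exact_mod_cast hs2
  have hs0 : (0:ℝ) < s := by linarith
  have hlogs : 0 < Real.log s := Real.log_pos (by linarith)
  have hBN : 1 ≤ B * (n * T / d) := by
    rw [div_le_iff₀ hBpos] at hT1
    rw [← mul_div_assoc, le_div_iff₀ hd]; linarith
  -- the number of grid classes
  have hcl := Nat.ceil_lt_add_one (a := Real.logb 2 (1 + B * (n * T / d)))
    (Real.logb_nonneg (by norm_num) (by linarith))
  have hcl2 := Nat.le_ceil (Real.logb 2 (1 + B * (n * T / d)))
  have hscast : (s:ℝ) = (⌈Real.logb 2 (1 + B * (n * T / d))⌉₊ : ℝ) + 2 := by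
    rw [hs]; push_cast; ring
  have hsL : (s:ℝ) ≤ Real.logb 2 (16 * B * n * T / d) := by
    have h1 : Real.logb 2 (16 * B * n * T / d) = 3 + Real.logb 2 (2 * (B * (n * T / d))) := by
      have : 16 * B * n * T / d = 2 ^ (3:ℝ) * (2 * (B * (n * T / d))) := by
        norm_num; ring
      rw [this, Real.logb_mul (by positivity) (by positivity), Real.logb_rpow (by norm_num) (by norm_num)]
    have h2 : Real.logb 2 (1 + B * (n * T / d)) ≤ Real.logb 2 (2 * (B * (n * T / d))) :=
      Real.logb_le_logb_of_le (by norm_num) (by linarith) (by linarith)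
    linarith
  have hpow : 2 * (1 + B * (n * T / d)) ≤ 2 ^ (s - 1) := by
    have h3 : Real.logb 2 (2 * (1 + B * (n * T / d))) ≤ ((s - 1 : ℕ) : ℝ) := by
      rw [Real.logb_mul (by norm_num) (by positivity), Real.logb_self_eq_one (by norm_num),
        Nat.cast_sub (by omega)]
      push_cast; linarith
    rw [Real.logb_le_iff_le_rpow (by norm_num) (by positivity)] at h3
    rwa [Real.rpow_natCast] at h3
  generalize hLdef : Real.logb 2 (16 * B * n * T / d) = L at hsL ⊢
  obtain ⟨q, hq⟩ : ∃ q, q = Real.sqrt (d / (n * (T / s))) := ⟨_, rfl⟩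
  obtain ⟨a, ha⟩ : ∃ a, a = Real.sqrt m := ⟨_, rfl⟩
  obtain ⟨b, hb⟩ : ∃ b, b = Real.sqrt (Real.log s) := ⟨_, rfl⟩
  obtain ⟨c, hc⟩ : ∃ c, c = Real.sqrt (m + Real.log s) := ⟨_, rfl⟩
  have hq0 : 0 < q := by rw [hq]; positivity
  have hqq : q ^ 2 = d / (n * (T / s)) := by rw [hq]; exact Real.sq_sqrt (by positivity)
  have ha0 : 0 ≤ a := by rw [ha]; positivity
  have hb0 : 0 ≤ b := by rw [hb]; positivity
  have hc0 : 0 < c := by rw [hc]; positivity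
  have haa : a ^ 2 = m := by rw [ha]; exact Real.sq_sqrt hm
  have hbb : b ^ 2 = Real.log s := by rw [hb]; exact Real.sq_sqrt hlogs.le
  have hcc : c ^ 2 = m + Real.log s := by rw [hc]; exact Real.sq_sqrt (by positivity)
  have hpen' : ∀ i, pen i (T / s) = 2 * r i * Xbar * q := fun i => by rw [hpen, hq]
  have hdiv : ∀ x : ℝ, x / (n * (T / s) / d) = x * (d / (n * (T / s))) := fun x => by
    field_simp
  have hsqm : ∀ i, Real.sqrt (m / nsamp i (T / s)) = a * q := fun i => by
    rw [hnsamp, hdiv, Real.sqrt_mul hm, ← ha, ← hq]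
  have hsql : ∀ i, Real.sqrt (Real.log s / nsamp i (T / s)) = b * q := fun i => by
    rw [hnsamp, hdiv, Real.sqrt_mul hlogs.le, ← hb, ← hq]
  have hpb : ∀ i, pbar i = 4 * r i * Xbar * q + c₂ * (Real.sqrt 2 * c * q) := fun i => by
    rw [hpbar, hpen', hnsamp, hdiv, Real.sqrt_mul (by positivity), Real.sqrt_mul (by norm_num),
      ← hc, ← hq]; ring
  simp only [hpen', hsqm, hsql] at hihat_min
  have hr : ∀ i, 0 < r i := fun i => lt_of_lt_of_le hr0 (hrm.monotone (Nat.zero_le i))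
  -- two elementary inequalities
  have h2 : Real.sqrt 2 ^ 2 = 2 := Real.sq_sqrt (by norm_num)
  have h20 : 0 < Real.sqrt 2 := by positivity
  have h21 : (1.4:ℝ) < Real.sqrt 2 := Real.lt_sqrt_of_sq_lt (by norm_num)
  have habc : a + b ≤ Real.sqrt 2 * c := by
    apply abs_le_of_sq_le_sq' _ (by positivity) |>.2
    rw [mul_pow, h2, hcc]; nlinarith [sq_nonneg (a - b)]
  have hcab : c ≤ a + b := by
    apply abs_le_of_sq_le_sq' _ (by positivity) |>.2
    rw [hcc]; nlinarith [mul_nonneg ha0 hb0]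
  -- near minimisers
  have hδ : 0 < c₂ * c * q * 0.1 := by positivity
  have hex : ∀ i, ∃ f ∈ 𝓕 i, R f < Rstar i + c₂ * c * q * 0.1 := by
    intro i
    obtain ⟨_, ⟨f, hf, rfl⟩, _, h⟩ := (hRstar i).exists_between (lt_add_of_pos_right (Rstar i) hδ)
    exact ⟨f, hf, h⟩
  choose g hg hgR using hex
  have hε : 0 < c * q / 2 := by positivity
  let Bad1 : ℕ → Set Ω := fun k => {ω | pen (jj k) (T / s) + c₂ * (c * q / 2) <
    |Lhat (jj k) (T / s) ω (fhat (jj k) (T / s) ω) - R (fhat (jj k) (T / s) ω)|}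
  let Bad2 : ℕ → Set Ω := fun k => {ω | c₂ * (c * q / 2) <
    |Lhat (jj k) (T / s) ω (g (jj k)) - R (g (jj k))|}
  let Bad3 : ℕ → Set Ω := fun k => {ω | ¬ ∀ f ∈ 𝓕 (jj k),
      Lhat (jj k) (T / s) ω (fhat (jj k) (T / s) ω) ≤ Lhat (jj k) (T / s) ω f + pen (jj k) (T / s)}
  have hexp : ∀ i, c₁ * Real.exp (-4 * nsamp i (T / s) * (c * q / 2) ^ 2)
      = c₁ * Real.exp (-m) / s := fun i => by
    have : -4 * nsamp i (T / s) * (c * q / 2) ^ 2 = -m - Real.log s := by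
      rw [hnsamp, div_pow, mul_pow, hcc, hqq]; field_simp; ring
    rw [this, Real.exp_sub, Real.exp_log hs0]; ring
  have hB1 : ∀ k, P (Bad1 k) ≤ ENNReal.ofReal (c₁ * Real.exp (-m) / s) := fun k => by
    rw [← hexp (jj k)]; exact hconc1 _ _ _ hε
  have hB2 : ∀ k, P (Bad2 k) ≤ ENNReal.ofReal (c₁ * Real.exp (-m) / s) := fun k => by
    rw [← hexp (jj k)]; exact hconc2 _ _ _ (hg _) _ hε
  have hB3 : ∀ k, P (Bad3 k) = 0 := fun k => hERM _ _
  let Bad : Set Ω := ⋃ k ∈ Finset.range s, (Bad1 k ∪ Bad2 k ∪ Bad3 k)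
  have hBad : P Bad ≤ ENNReal.ofReal (2 * c₁ * Real.exp (-m)) := by
    calc P Bad ≤ ∑ k ∈ Finset.range s, P (Bad1 k ∪ Bad2 k ∪ Bad3 k) :=
          measure_biUnion_finset_le _ _
      _ ≤ ∑ k ∈ Finset.range s, ENNReal.ofReal (2 * c₁ * Real.exp (-m) / s) := by
          apply Finset.sum_le_sum
          intro k _
          calc P (Bad1 k ∪ Bad2 k ∪ Bad3 k) ≤ P (Bad1 k) + P (Bad2 k) + P (Bad3 k) :=
                (measure_union_le _ _).trans (add_le_add_left (measure_union_le _ _) _)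
            _ ≤ ENNReal.ofReal (c₁ * Real.exp (-m) / s) + ENNReal.ofReal (c₁ * Real.exp (-m) / s) := by
                rw [hB3, add_zero]; exact add_le_add (hB1 k) (hB2 k)
            _ = _ := by
                rw [← ENNReal.ofReal_add (by positivity) (by positivity)]; congr 1; ring
      _ = _ := by
          rw [Finset.sum_const, Finset.card_range, nsmul_eq_mul, ← ENNReal.ofReal_natCast,
            ← ENNReal.ofReal_mul (by positivity)]
          congr 1; field_simp
  -- deterministic part
  have horacle : ∀ ω, ω ∉ Bad → ∀ k < s,
      R (fhat (ihat ω) (T / s) ω) ≤ Rstar (jj k) + pbar (jj k) := by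
    intro ω hω k hk
    have hno : ∀ k < s, ω ∉ Bad1 k ∧ ω ∉ Bad2 k ∧ ω ∉ Bad3 k := by
      intro k hk
      refine ⟨fun h => hω ?_, fun h => hω ?_, fun h => hω ?_⟩ <;>
        refine Set.mem_biUnion (Finset.mem_coe.2 (Finset.mem_range.2 hk)) ?_
      · exact Or.inl (Or.inl h)
      · exact Or.inl (Or.inr h)
      · exact Or.inr h
    have hi := hihat_mem ω
    rw [hSdef, Finset.mem_image] at hi
    obtain ⟨k', hk', hkk⟩ := hi
    have e1 := (hno k' (Finset.mem_range.1 hk')).1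
    simp only [Bad1, Set.mem_ofPred_eq, not_lt, hkk, hpen'] at e1
    obtain ⟨-, e2, e3⟩ := hno k hk
    simp only [Bad2, Bad3, Set.mem_ofPred_eq, not_lt, not_not, hpen'] at e2 e3
    have e3 := e3 _ (hg _)
    have e4 := hihat_min ω (jj k) (by
      rw [hSdef]; exact Finset.mem_image_of_mem _ (Finset.mem_range.2 hk))
    have e5 := hgR (jj k)
    rw [hpb]
    have e1 := (abs_le.1 e1).1
    have e2 := (abs_le.1 e2).2
    have e6 : c₂ * q * c ≤ c₂ * q * (a + b) := by gcongr
    have e7 : c₂ * q * (a + b) ≤ c₂ * q * (Real.sqrt 2 * c) := by gcongr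
    have e8 : 1.4 * (c₂ * q * c) ≤ Real.sqrt 2 * (c₂ * q * c) := by gcongr
    have e9 : 0 < c₂ * q * c := by positivity
    linarith
  have hanti : ∀ i j, i ≤ j → Rstar j ≤ Rstar i := fun i j h =>
    (hRstar i).mono (hRstar j) (Set.image_mono (hnested i j h))
  have hRs0 : ∀ i, 0 ≤ Rstar i := fun i => (hRstar i).2 (by
    rintro _ ⟨f, _, rfl⟩; exact hRnonneg f)
  have hpb0 : 0 < pbar 0 := by rw [hpb]; positivity
  have hpbm : ∀ i, pbar 0 ≤ pbar i := fun i => by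
    rw [hpb, hpb]; have := hrm.monotone (Nat.zero_le i); gcongr
  have hmain : ∀ ω, ω ∉ Bad → ∀ i, R (fhat (ihat ω) (T / s) ω) ≤ Rstar i + 2 * pbar i := by
    intro ω hω i
    have ho := horacle ω hω
    by_cases hi : pbar i ≤ 2 ^ (s - 1) * pbar 0
    · classical
      have hexk : ∃ k, pbar i ≤ 2 ^ k * pbar 0 := ⟨_, hi⟩
      have hks : Nat.find hexk < s := lt_of_le_of_lt (Nat.find_min' hexk hi) (by omega)
      have hk1 := Nat.find_spec hexk
      have hkm : 2 ^ (Nat.find hexk) * pbar 0 ≤ 2 * pbar i := by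
        rcases Nat.eq_zero_or_pos (Nat.find hexk) with h0 | h0
        · rw [h0]; have := hpbm i; linarith
        · have := Nat.find_min hexk (Nat.sub_lt h0 one_pos)
          rw [not_le] at this
          have e : (2:ℝ) ^ (Nat.find hexk) = 2 * 2 ^ (Nat.find hexk - 1) := by
            rw [← pow_succ']; congr 1; omega
          rw [e]; linarith
      have := ho _ hks
      have h1 := (hjj _ hks).1
      have h3 := hanti _ _ ((hjj _ hks).2 i hk1)
      linarith
    · rw [not_le] at hi
      have h0 := ho 0 (by omega)
      have h1 := hjj 0 (by omega)
      have h3 := hanti _ _ (Nat.zero_le (jj 0))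
      have h4 := h1.1
      rw [pow_zero, one_mul] at h4
      have h5 : 1 ≤ (2 * r 0 * Xbar) * (n * T / d) * q := by
        apply abs_le_of_sq_le_sq' _ (by positivity) |>.2
        rw [div_le_iff₀ (by positivity)] at hT2
        have : ((2 * r 0 * Xbar) * (n * T / d) * q) ^ 2
            = (n * T * (4 * r 0 ^ 2 * Xbar ^ 2)) / d * s := by
          rw [mul_pow, hqq]; field_simp; ring
        rw [this]
        have h6 : 1 ≤ (n * T * (4 * r 0 ^ 2 * Xbar ^ 2)) / d := by
          rw [le_div_iff₀ hd]; linarith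
        rw [one_pow]; exact one_le_mul_of_one_le_of_one_le h6 (by linarith)
      have h6 : B ≤ pbar i := by
        have h7 : B * ((2 * r 0 * Xbar) * (n * T / d) * q) ≥ B * 1 := by gcongr
        have h8 : 4 * r 0 * Xbar * q ≤ pbar 0 := by
          rw [hpb]; have : 0 < c₂ * (Real.sqrt 2 * c * q) := by positivity
          linarith
        have h9 : 2 * (B * (n * T / d)) * (4 * r 0 * Xbar * q) ≤ 2 ^ (s - 1) * pbar 0 := by
          gcongr; linarith
        have h10 : 2 * (B * (n * T / d)) * (4 * r 0 * Xbar * q)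
          = 4 * (B * ((2 * r 0 * Xbar) * (n * T / d) * q)) := by ring
        linarith
      have := hRs0 i
      have := hpbm i
      linarith
  have hfin : ∀ i, 2 * pbar i ≤ Real.sqrt (d * L / (n * T))
          * (8 * r i * Xbar + Real.sqrt 8 * c₂ * Real.sqrt (m + Real.log L)) := by
    intro i
    have e1 : q ≤ Real.sqrt (d * L / (n * T)) := by
      rw [hq]; apply Real.sqrt_le_sqrt
      have : d / (n * (T / s)) = d * s / (n * T) := by field_simp
      rw [this]; gcongr
    have e2 : c ≤ Real.sqrt (m + Real.log L) := by
      rw [hc]; apply Real.sqrt_le_sqrt; gcongr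
    have e3 : Real.sqrt 8 = 2 * Real.sqrt 2 := by
      rw [show (8:ℝ) = 2 ^ 2 * 2 by norm_num, Real.sqrt_mul (by norm_num),
        Real.sqrt_sq (by norm_num)]
    have := hr i
    calc 2 * pbar i = q * (8 * r i * Xbar + Real.sqrt 8 * c₂ * c) := by rw [hpb, e3]; ring
      _ ≤ _ := by gcongr
  -- conclusion
  rw [ENNReal.ofReal_sub _ (by positivity), ENNReal.ofReal_one, tsub_le_iff_right]
  refine le_trans ?_ (add_le_add_right hBad _)
  refine le_trans ?_ (measure_union_le _ _)
  rw [← measure_univ (μ := P)]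
  apply measure_mono
  intro ω _
  by_cases hω : ω ∈ Bad
  · exact Or.inr hω
  · left
    intro i
    have := hmain ω hω i
    have := hfin i
    linarith
end

section
/- In the nested computationally budgeted model-selection setup specialized to linear classification in increasing dimensions—where class i uses nᵢ(t) = n·t/dᵢ samples under budget t and penᵢ(t) = √(dᵢ/nᵢ(t)) = dᵢ/√(n·t)—assume n·T ≥ 1 and n·T ≥ d₁/B. Then with probability at least 1 − 2c₁·exp(−m), the output f of the coarse-grid model-selection algorithm satisfies R(f) ≤ inf_{i=1,2,…} { Rᵢ* + √(dᵢ·log₂(16B·nT/d₁)/(nT)) · ( 4√dᵢ + √8·c₂·√(m + log log₂(16B·nT/d₁)) ) }. -/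
open MeasureTheory

lemma aux_eps (m l ν : ℝ) (hm : 0 ≤ m) (hl : 0 < l) (hν : 0 < ν) :
    0 < (√(m / ν) + √(l / ν)) / 2 ∧ m + l ≤ 4 * ν * ((√(m / ν) + √(l / ν)) / 2) ^ 2 ∧
    √(m / ν) + √(l / ν) ≤ √(2 * (m + l) / ν) := by
  have h1 : 0 ≤ √(m / ν) := Real.sqrt_nonneg _
  have h2 : 0 < √(l / ν) := Real.sqrt_pos.2 (by positivity)
  have e1 : √(m / ν) ^ 2 = m / ν := Real.sq_sqrt (by positivity)
  have e2 : √(l / ν) ^ 2 = l / ν := Real.sq_sqrt (by positivity)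
  refine ⟨by positivity, ?_, ?_⟩
  · have : 4 * ν * ((√(m / ν) + √(l / ν)) / 2) ^ 2
        = ν * (√(m / ν) ^ 2) + ν * √(l / ν) ^ 2 + 2 * (ν * (√(m / ν) * √(l / ν))) := by ring
    rw [this, e1, e2, mul_div_cancel₀ _ hν.ne', mul_div_cancel₀ _ hν.ne']
    have : 0 ≤ ν * (√(m / ν) * √(l / ν)) := by positivity
    linarith
  · apply Real.le_sqrt_of_sq_le
    have : 2 * (m + l) / ν = 2 * (m / ν) + 2 * (l / ν) := by ring
    rw [this]
    nlinarith [sq_nonneg (√(m / ν) - √(l / ν))]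

lemma aux_bound (D N s L c₂ m : ℝ) (hD : 0 < D) (hN : 0 < N) (hs : 1 ≤ s) (hL : s ≤ L)
    (hc : 0 < c₂) (hm : 0 ≤ m) :
    2 * (2 * √(D / (N / s / D)) + c₂ * √(2 * (m + Real.log s) / (N / s / D)))
    ≤ √(D * L / N) * (4 * √D + √8 * c₂ * √(m + Real.log L)) := by
  have hs0 : 0 < s := by linarith
  have hls : 0 ≤ Real.log s := Real.log_nonneg hs
  have hll : Real.log s ≤ Real.log L := Real.log_le_log hs0 hL
  have hL0 : 0 < L := by linarith
  have h8 : √8 = 2 * √2 := by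
    rw [show (8:ℝ) = 2 ^ 2 * 2 by norm_num, Real.sqrt_mul (by norm_num), Real.sqrt_sq (by norm_num)]
  have a1 : √(D / (N / s / D)) ≤ √(D * L / N) * √D := by
    rw [← Real.sqrt_mul (by positivity)]
    apply Real.sqrt_le_sqrt
    have : D / (N / s / D) = D * s / N * D := by field_simp
    rw [this]; gcongr
  have a2 : √(2 * (m + Real.log s) / (N / s / D)) ≤ √(D * L / N) * (√2 * √(m + Real.log L)) := by
    rw [← Real.sqrt_mul (by positivity), ← Real.sqrt_mul (by positivity)]
    apply Real.sqrt_le_sqrt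
    have : 2 * (m + Real.log s) / (N / s / D) = D * s / N * (2 * (m + Real.log s)) := by field_simp
    rw [this]; gcongr
  have a3 := mul_le_mul_of_nonneg_left a2 hc.le
  rw [h8]
  calc _ ≤ 2 * (2 * (√(D * L / N) * √D) + c₂ * (√(D * L / N) * (√2 * √(m + Real.log L)))) := by
        linarith
    _ = _ := by ring

lemma aux_union {Ω : Type*} [MeasurableSpace Ω] (P : Measure Ω) (s : ℕ) (hs : 0 < s)
    (A : ℕ → Set Ω) (x : ℝ) (h : ∀ k < s, P (A k) ≤ ENNReal.ofReal (x / s)) :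
    P (⋃ k ∈ Finset.range s, A k) ≤ ENNReal.ofReal x := by
  refine (measure_biUnion_finset_le _ _).trans ?_
  refine (Finset.sum_le_sum (fun k hk => h k (Finset.mem_range.1 hk))).trans ?_
  rw [Finset.sum_const, Finset.card_range, nsmul_eq_mul, ← ENNReal.ofReal_natCast,
    ← ENNReal.ofReal_mul (by positivity)]
  apply ENNReal.ofReal_le_ofReal
  have : (s:ℝ) ≠ 0 := by positivity
  rw [mul_div_cancel₀ _ this]

lemma aux_s (Y : ℝ) (hY : 1 ≤ Y) (s : ℕ) (hs : s = ⌈Real.logb 2 (1 + Y)⌉₊ + 2) :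
    2 ≤ s ∧ (s : ℝ) ≤ Real.logb 2 (16 * Y) ∧ 2 * (1 + Y) ≤ 2 ^ (s - 1) := by
  have h0 : 0 ≤ Real.logb 2 (1 + Y) := Real.logb_nonneg (by norm_num) (by linarith)
  refine ⟨by omega, ?_, ?_⟩
  · have h1 := Nat.ceil_lt_add_one h0
    have h2 : Real.logb 2 (1 + Y) ≤ Real.logb 2 (2 * Y) :=
      Real.logb_le_logb_of_le (by norm_num) (by linarith) (by linarith)
    have h3 : Real.logb 2 (16 * Y) = 3 + Real.logb 2 (2 * Y) := by
      rw [show 16 * Y = 2 ^ (3:ℝ) * (2 * Y) by norm_num; ring,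
        Real.logb_mul (by positivity) (by positivity), Real.logb_rpow (by norm_num) (by norm_num)]
    rw [hs, h3]; push_cast; linarith
  · have h1 := Nat.le_ceil (Real.logb 2 (1 + Y))
    have h2 : 1 + Y ≤ 2 ^ ((⌈Real.logb 2 (1 + Y)⌉₊ : ℕ) : ℝ) :=
      (Real.logb_le_iff_le_rpow (by norm_num) (by linarith)).1 h1
    rw [Real.rpow_natCast] at h2
    have : s - 1 = ⌈Real.logb 2 (1 + Y)⌉₊ + 1 := by omega
    rw [this, pow_succ]; linarith

/-- Corollary 1(b) of Agarwal–Bartlett–Duchi: the coarse-grid model-selection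
algorithm applied to linear classification in increasing dimensions, where
class `i` processes `nᵢ(t) = n t / dᵢ` samples under budget `t` and
`penᵢ(t) = √(dᵢ / nᵢ(t)) = dᵢ / √(n t)`.  Provided `nT ≥ 1` and
`nT ≥ d₁/B`, with probability at least `1 - 2c₁ exp(-m)` the output satisfies
the stated oracle inequality.  (Classes are indexed by `ℕ`, with index `0`
playing the role of class `1`; budgets and sample sizes are real.) -/
theorem stmt6 {Ω : Type*} [MeasurableSpace Ω] (P : Measure Ω) [IsProbabilityMeasure P]
    {F : Type*} (𝓕 : ℕ → Set F)
    (hnested : ∀ i j : ℕ, i ≤ j → 𝓕 i ⊆ 𝓕 j)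
    (R : F → ℝ) (hRnonneg : ∀ f, 0 ≤ R f)
    (Rstar : ℕ → ℝ) (hRstar : ∀ i, IsGLB (R '' 𝓕 i) (Rstar i))
    (c₁ c₂ : ℝ) (hc₁ : 0 < c₁) (hc₂ : 0 < c₂)
    (m : ℝ) (hm : 0 ≤ m)
    (B : ℝ) (hBpos : 0 < B) (hB : Rstar 0 ≤ B)
    (n : ℝ) (hn : 0 < n)
    (d : ℕ → ℝ) (hd0 : 0 < d 0) (hdm : StrictMono d)
    (hddiv : Filter.Tendsto d Filter.atTop Filter.atTop)
    (T : ℝ) (hT : 0 < T)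
    (hT1 : 1 ≤ n * T) (hT2 : d 0 / B ≤ n * T)
    (nsamp : ℕ → ℝ → ℝ) (hnsamp : ∀ (i : ℕ) (t : ℝ), nsamp i t = n * t / d i)
    (pen : ℕ → ℝ → ℝ)
    (hpen : ∀ (i : ℕ) (t : ℝ), pen i t = Real.sqrt (d i / nsamp i t))
    (fhat : ℕ → ℝ → Ω → F) (Lhat : ℕ → ℝ → Ω → F → ℝ)
    (hmem : ∀ i t ω, fhat i t ω ∈ 𝓕 i)
    (hERM : ∀ (i : ℕ) (t : ℝ), ∀ᵐ ω ∂P, ∀ f ∈ 𝓕 i,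
      Lhat i t ω (fhat i t ω) ≤ Lhat i t ω f + pen i t)
    (hconc1 : ∀ (i : ℕ) (t ε : ℝ), 0 < ε →
      P {ω | pen i t + c₂ * ε < |Lhat i t ω (fhat i t ω) - R (fhat i t ω)|}
        ≤ ENNReal.ofReal (c₁ * Real.exp (-4 * nsamp i t * ε ^ 2)))
    (hconc2 : ∀ (i : ℕ) (t : ℝ), ∀ f ∈ 𝓕 i, ∀ ε : ℝ, 0 < ε →
      P {ω | c₂ * ε < |Lhat i t ω f - R f|}
        ≤ ENNReal.ofReal (c₁ * Real.exp (-4 * nsamp i t * ε ^ 2)))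
    (s : ℕ) (hs : s = ⌈Real.logb 2 (1 + B * (n * T / d 0))⌉₊ + 2)
    (pbar : ℕ → ℝ)
    (hpbar : ∀ i, pbar i = 2 * pen i (T / s)
      + c₂ * Real.sqrt (2 * (m + Real.log s) / nsamp i (T / s)))
    (jj : ℕ → ℕ)
    (hjj : ∀ k < s, pbar (jj k) ≤ 2 ^ k * pbar 0 ∧
      ∀ j : ℕ, pbar j ≤ 2 ^ k * pbar 0 → j ≤ jj k)
    (S : Finset ℕ) (hSdef : S = (Finset.range s).image jj)
    (ihat : Ω → ℕ)
    (hihat_mem : ∀ ω, ihat ω ∈ S)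
    (hihat_min : ∀ ω, ∀ i ∈ S,
      Lhat (ihat ω) (T / s) ω (fhat (ihat ω) (T / s) ω) + pen (ihat ω) (T / s)
        + c₂ / 2 * Real.sqrt (m / nsamp (ihat ω) (T / s))
        + c₂ / 2 * Real.sqrt (Real.log s / nsamp (ihat ω) (T / s))
      ≤ Lhat i (T / s) ω (fhat i (T / s) ω) + pen i (T / s)
        + c₂ / 2 * Real.sqrt (m / nsamp i (T / s))
        + c₂ / 2 * Real.sqrt (Real.log s / nsamp i (T / s))) :
    ENNReal.ofReal (1 - 2 * c₁ * Real.exp (-m)) ≤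
      P {ω | ∀ i : ℕ, R (fhat (ihat ω) (T / s) ω) ≤
        Rstar i + Real.sqrt (d i * Real.logb 2 (16 * B * n * T / d 0) / (n * T))
          * (4 * Real.sqrt (d i)
            + Real.sqrt 8 * c₂
              * Real.sqrt (m + Real.log (Real.logb 2 (16 * B * n * T / d 0))))} := by
  have hd : ∀ i, 0 < d i := fun i => hd0.trans_le (hdm.monotone (Nat.zero_le i))
  have hN : 0 < n * T := by positivity
  have hY : 1 ≤ B * (n * T / d 0) := by
    rw [div_le_iff₀ hBpos] at hT2
    rw [← mul_div_assoc, le_div_iff₀ hd0]; linarith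
  obtain ⟨hs2, hsL, hspow⟩ := aux_s _ hY s hs
  have hLeq : 16 * B * n * T / d 0 = 16 * (B * (n * T / d 0)) := by ring
  rw [hLeq]
  set L := Real.logb 2 (16 * (B * (n * T / d 0))) with hLdef
  have hs0 : (0:ℝ) < s := by positivity
  have hs1 : (2:ℝ) ≤ s := by exact_mod_cast hs2
  have hlog : 0 < Real.log s := Real.log_pos (by linarith)
  have hν : ∀ i, nsamp i (T / s) = n * T / s / d i := fun i => by rw [hnsamp]; ring
  have hνpos : ∀ i, 0 < nsamp i (T / s) := fun i => by
    rw [hν]; have := hd i; positivity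
  have hpb : ∀ i, 2 * pbar i ≤ √(d i * L / (n * T)) * (4 * √(d i) + √8 * c₂ * √(m + Real.log L)) := by
    intro i
    rw [hpbar, hpen, hν]
    exact aux_bound (d i) (n * T) s L c₂ m (hd i) hN (by linarith) hsL hc₂ hm
  have hpen0 : ∀ i, 0 ≤ pen i (T / s) := fun i => by rw [hpen]; positivity
  have hpb0 : ∀ i, 0 ≤ pbar i := fun i => by
    rw [hpbar]; have := hpen0 i; positivity
  have hpmono : ∀ i, pbar 0 ≤ pbar i := by
    intro i
    have hdi : d 0 ≤ d i := hdm.monotone (Nat.zero_le i)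
    have := hd i
    rw [hpbar, hpbar, hpen, hpen, hν, hν]
    gcongr
  have hRmono : ∀ i j, i ≤ j → Rstar j ≤ Rstar i := fun i j h =>
    (hRstar i).mono (hRstar j) (Set.image_mono (hnested i j h))
  have hR0 : ∀ i, 0 ≤ Rstar i := fun i => (hRstar i).2 (by
    rintro _ ⟨f, _, rfl⟩; exact hRnonneg f)
  -- deterministic reduction
  have hdet : ∀ i, ∃ k < s, Rstar (jj k) + pbar (jj k) ≤ Rstar i + 2 * pbar i := by
    intro i
    by_cases hi : pbar i ≤ 2 ^ (s - 1) * pbar 0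
    · classical
      have hex : ∃ k, pbar i ≤ 2 ^ k * pbar 0 := ⟨_, hi⟩
      have hk1 := Nat.find_spec hex
      have hk2 : Nat.find hex ≤ s - 1 := Nat.find_min' hex hi
      have hk3 : ∀ l < Nat.find hex, ¬ pbar i ≤ 2 ^ l * pbar 0 := fun l hl => Nat.find_min hex hl
      generalize Nat.find hex = k at hk1 hk2 hk3
      have hks : k < s := by omega
      refine ⟨k, hks, ?_⟩
      obtain ⟨ha, hb⟩ := hjj k hks
      have h1 := hRmono i (jj k) (hb i hk1)
      have h2 : 2 ^ k * pbar 0 ≤ 2 * pbar i := by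
        rcases k with _ | k
        · have := hpmono i; have := hpb0 i; simp; linarith
        · have := hk3 k (Nat.lt_succ_self k)
          rw [pow_succ]; linarith
      linarith
    · push Not at hi
      refine ⟨0, by omega, ?_⟩
      obtain ⟨ha, hb⟩ := hjj 0 (by omega)
      have h1 := hRmono 0 (jj 0) (Nat.zero_le _)
      have h2 := hR0 i
      have h3 : 2 * (1 + B * (n * T / d 0)) * pbar 0 ≤ 2 ^ (s - 1) * pbar 0 :=
        mul_le_mul_of_nonneg_right hspow (hpb0 0)
      have h4 : d 0 / (n * T) ≤ pbar 0 := by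
        have : d 0 / (n * T) ≤ pen 0 (T / s) := by
          rw [hpen, hν]
          apply Real.le_sqrt_of_sq_le
          have : d 0 / (n * T / s / d 0) = (d 0) ^ 2 * s / (n * T) := by field_simp
          rw [this, div_pow, div_le_div_iff₀ (by positivity) hN]
          have : n * T ≤ s * (n * T) ^ 2 := by nlinarith
          nlinarith [mul_le_mul_of_nonneg_left this (sq_nonneg (d 0))]
        have h5 := hpen0 0
        have h6 : 0 ≤ c₂ * √(2 * (m + Real.log s) / nsamp 0 (T / s)) := by positivity
        rw [hpbar]; linarith
      have h5 : B ≤ B * (n * T / d 0) * pbar 0 := by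
        have := mul_le_mul_of_nonneg_left h4 (show 0 ≤ B * (n * T / d 0) by positivity)
        have h6 : B * (n * T / d 0) * (d 0 / (n * T)) = B := by field_simp
        linarith
      have := hpb0 0
      simp at ha
      nlinarith
  -- epsilons
  set ε : ℕ → ℝ := fun i => (√(m / nsamp i (T / s)) + √(Real.log s / nsamp i (T / s))) / 2 with hε
  have hεp : ∀ i, 0 < ε i := fun i => (aux_eps m _ _ hm hlog (hνpos i)).1
  have hεe : ∀ i, c₁ * Real.exp (-4 * nsamp i (T / s) * ε i ^ 2) ≤ c₁ * Real.exp (-m) / s := by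
    intro i
    have h1 := (aux_eps m _ _ hm hlog (hνpos i)).2.1
    have h2 : Real.exp (-m) / s = Real.exp (-m - Real.log s) := by
      rw [Real.exp_sub, Real.exp_log hs0]
    rw [mul_div_assoc, h2]
    gcongr
    simp only [hε]; linarith
  have hεb : ∀ i, 2 * pen i (T / s) + 2 * (c₂ * ε i) ≤ pbar i := by
    intro i
    have h1 := mul_le_mul_of_nonneg_left (aux_eps m _ _ hm hlog (hνpos i)).2.2 hc₂.le
    rw [hpbar]; simp only [hε]; linarith
  -- the bad sets
  set bad : ℕ → Set Ω := fun q => {ω | ∃ k < s,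
    Rstar (jj k) + pbar (jj k) + 1 / ((q:ℝ) + 1) < R (fhat (ihat ω) (T / s) ω)} with hbad
  have hbadq : ∀ q, P (bad q) ≤ ENNReal.ofReal (2 * c₁ * Real.exp (-m)) := by
    intro q
    have hδ : (0:ℝ) < 1 / ((q:ℝ) + 1) := by positivity
    have hch : ∀ i, ∃ f ∈ 𝓕 i, R f < Rstar i + 1 / ((q:ℝ) + 1) := by
      intro i
      obtain ⟨_, ⟨f, hf, rfl⟩, _, h⟩ := (hRstar i).exists_between
        (show Rstar i < Rstar i + 1 / ((q:ℝ) + 1) by linarith)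
      exact ⟨f, hf, h⟩
    choose g hg hgR using hch
    set A1 : ℕ → Set Ω := fun k => {ω | pen (jj k) (T / s) + c₂ * ε (jj k) <
      |Lhat (jj k) (T / s) ω (fhat (jj k) (T / s) ω) - R (fhat (jj k) (T / s) ω)|} with hA1
    set A2 : ℕ → Set Ω := fun k => {ω | c₂ * ε (jj k) <
      |Lhat (jj k) (T / s) ω (g (jj k)) - R (g (jj k))|} with hA2
    have p1 := aux_union P s (by omega) A1 (c₁ * Real.exp (-m)) (fun k _ =>
      (hconc1 (jj k) (T / s) _ (hεp _)).trans (ENNReal.ofReal_le_ofReal (hεe _)))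
    have p2 := aux_union P s (by omega) A2 (c₁ * Real.exp (-m)) (fun k _ =>
      (hconc2 (jj k) (T / s) _ (hg _) _ (hεp _)).trans (ENNReal.ofReal_le_ofReal (hεe _)))
    have hae : ∀ᵐ ω ∂P, ∀ i, ∀ f ∈ 𝓕 i,
      Lhat i (T / s) ω (fhat i (T / s) ω) ≤ Lhat i (T / s) ω f + pen i (T / s) :=
      ae_all_iff.2 (fun i => hERM i (T / s))
    have hsub : P (bad q) ≤ P ((⋃ k ∈ Finset.range s, A1 k) ∪ (⋃ k ∈ Finset.range s, A2 k)) := by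
      apply measure_mono_ae
      filter_upwards [hae] with ω hω hb
      by_contra hcon
      have hn1 : ∀ k < s, ω ∉ A1 k := fun k hk h => hcon (Or.inl (by
        simp only [Set.mem_iUnion, Finset.mem_range]; exact ⟨k, hk, h⟩))
      have hn2 : ∀ k < s, ω ∉ A2 k := fun k hk h => hcon (Or.inr (by
        simp only [Set.mem_iUnion, Finset.mem_range]; exact ⟨k, hk, h⟩))
      obtain ⟨k, hk, hlt⟩ := hb
      have hm1 := hihat_mem ω
      rw [hSdef, Finset.mem_image] at hm1
      obtain ⟨k', hk', hik⟩ := hm1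
      have e1 := hn1 k' (Finset.mem_range.1 hk')
      have e2 := hn2 k hk
      simp only [hA1, hA2, Set.mem_setOf_eq, not_lt] at e1 e2
      rw [hik] at e1
      have e3 := hihat_min ω (jj k) (by
        rw [hSdef]; exact Finset.mem_image_of_mem _ (Finset.mem_range.2 hk))
      have e4 := hω (jj k) (g (jj k)) (hg _)
      have e5 := hgR (jj k)
      have e6 := hεb (jj k)
      have e1' := (abs_le.1 e1).1
      have e2' := (abs_le.1 e2).2
      have q1 : ∀ i, c₂ * ε i = c₂ / 2 * √(m / nsamp i (T / s))
        + c₂ / 2 * √(Real.log s / nsamp i (T / s)) := fun i => by simp only [hε]; ring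
      have q2 := q1 (ihat ω)
      have q3 := q1 (jj k)
      linarith
    refine hsub.trans ((measure_union_le _ _).trans ((add_le_add p1 p2).trans ?_))
    rw [← ENNReal.ofReal_add (by positivity) (by positivity)]
    apply ENNReal.ofReal_le_ofReal
    linarith
  have hmonob : Monotone bad := by
    intro q r hqr ω hω
    obtain ⟨k, hk, h⟩ := hω
    refine ⟨k, hk, lt_of_le_of_lt ?_ h⟩
    have : 1 / ((r:ℝ) + 1) ≤ 1 / ((q:ℝ) + 1) := Nat.one_div_le_one_div hqr
    linarith
  have hU : P (⋃ q, bad q) ≤ ENNReal.ofReal (2 * c₁ * Real.exp (-m)) := by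
    rw [hmonob.measure_iUnion]
    exact iSup_le hbadq
  set G := {ω | ∀ i : ℕ, R (fhat (ihat ω) (T / s) ω) ≤
        Rstar i + √(d i * L / (n * T)) * (4 * √(d i) + √8 * c₂ * √(m + Real.log L))} with hG
  have hcov : Gᶜ ⊆ ⋃ q, bad q := by
    intro ω hω
    simp only [hG, Set.mem_compl_iff, Set.mem_setOf_eq, not_forall, not_le] at hω
    obtain ⟨i, hi⟩ := hω
    obtain ⟨k, hk, h⟩ := hdet i
    have h1 := hpb i
    obtain ⟨q, hq⟩ := exists_nat_one_div_lt
      (show 0 < R (fhat (ihat ω) (T / s) ω) - (Rstar (jj k) + pbar (jj k)) by linarith)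
    rw [Set.mem_iUnion]
    exact ⟨q, k, hk, by linarith⟩
  rw [ENNReal.ofReal_sub _ (by positivity), ENNReal.ofReal_one, tsub_le_iff_right]
  calc (1 : ENNReal) = P Set.univ := measure_univ.symm
    _ = P (G ∪ Gᶜ) := by rw [Set.union_compl_self]
    _ ≤ P G + P Gᶜ := measure_union_le _ _
    _ ≤ _ := by gcongr; exact (measure_mono hcov).trans hU
end

section
/- (Deterministic fast-rate comparison, higher classes.) Suppose the events E1 and E2 hold for all pairs i, j ∈ S with |S| = s, assume ζ ≥ 17/2 and κ ≥ 7/2, and let î be selected by the rule: î is the largest index in S such that L̂_{î}(f̂_{î}) + ζ·pen_{î}(n_{î}) + κ·c₂·ε_{î} ≤ L̂_{î}(f̂ⱼ) + ζ·penⱼ(nⱼ) for every j ∈ S with j < î. Then for every j ∈ S with j ≥ î, R(f̂_{î}) ≤ R(fⱼ*) + s·[ (2ζ + 3)·penⱼ(nⱼ) + (2κ + 1)·c₂·εⱼ ]. -/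
/-- Deterministic fast-rate comparison for higher classes (Lemma 5 /
`lemma:nesting-fast-upper` of Agarwal–Bartlett–Duchi): under the events E1 and
E2 for all pairs in `S` (with `|S| = s`), `ζ ≥ 17/2`, `κ ≥ 7/2`, and `î`
chosen as the largest index in `S` satisfying the selection rule against all
smaller grid classes, for every `j ∈ S` with `j ≥ î`,
`R(f̂_î) ≤ R(fⱼ*) + s[(2ζ+3) penⱼ(nⱼ) + (2κ+1) c₂ εⱼ]`. -/
theorem stmt9 {F : Type*} (𝓕 : ℕ → Set F)
    (hnested : ∀ i j : ℕ, i ≤ j → 𝓕 i ⊆ 𝓕 j)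
    (R : F → ℝ) (S : Finset ℕ) (s : ℕ) (hcard : S.card = s)
    (fstar : ℕ → F) (hfstar_mem : ∀ i, fstar i ∈ 𝓕 i)
    (hfstar_min : ∀ i, ∀ f ∈ 𝓕 i, R (fstar i) ≤ R f)
    (nsz : ℕ → ℕ) (pen : ℕ → ℕ → ℝ)
    (hpenmono : ∀ j i : ℕ, j ≤ i → ∀ n : ℕ, pen j n ≤ pen i n)
    (Lhat : ℕ → F → ℝ) (fhat : ℕ → F) (hmem : ∀ i, fhat i ∈ 𝓕 i)
    (hERM : ∀ i ∈ S, ∀ f ∈ 𝓕 i, Lhat i (fhat i) ≤ Lhat i f + pen i (nsz i))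
    (eps : ℕ → ℝ) (heps : ∀ i, 0 < eps i)
    (hpen_nondec : ∀ i ∈ S, ∀ j ∈ S, j ≤ i → pen j (nsz j) ≤ pen i (nsz i))
    (heps_nondec : ∀ i ∈ S, ∀ j ∈ S, j ≤ i → eps j ≤ eps i)
    (ζ κ c₂ : ℝ) (hζ : 17 / 2 ≤ ζ) (hκ : 7 / 2 ≤ κ) (hc₂ : 0 < c₂)
    (hE1 : ∀ i ∈ S, ∀ j ∈ S, ∀ f ∈ 𝓕 j,
      R f - R (fstar j) - 2 * (Lhat i f - Lhat i (fstar j)) ≤ pen j (nsz i) + c₂ * eps i)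
    (hE2 : ∀ i ∈ S, ∀ j ∈ S, ∀ f ∈ 𝓕 j,
      Lhat i f - Lhat i (fstar j) - 2 * (R f - R (fstar j)) ≤ pen j (nsz i) + c₂ * eps i)
    (ihat : ℕ) (hihat_mem : ihat ∈ S)
    (hihat_sel : ∀ j ∈ S, j < ihat →
      Lhat ihat (fhat ihat) + ζ * pen ihat (nsz ihat) + κ * c₂ * eps ihat
        ≤ Lhat ihat (fhat j) + ζ * pen j (nsz j))
    (hihat_max : ∀ i' ∈ S,
      (∀ j ∈ S, j < i' →
        Lhat i' (fhat i') + ζ * pen i' (nsz i') + κ * c₂ * eps i'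
          ≤ Lhat i' (fhat j) + ζ * pen j (nsz j)) → i' ≤ ihat) :
    ∀ j ∈ S, ihat ≤ j →
      R (fhat ihat) ≤ R (fstar j) +
        (s : ℝ) * ((2 * ζ + 3) * pen j (nsz j) + (2 * κ + 1) * c₂ * eps j) := by
  have hpos : ∀ i ∈ S, 0 ≤ pen i (nsz i) := fun i hi => by
    have := hERM i hi (fhat i) (hmem i)
    linarith
  have hBmono : ∀ i ∈ S, ∀ j ∈ S, j ≤ i →
      (2 * ζ + 3) * pen j (nsz j) + (2 * κ + 1) * c₂ * eps j ≤
      (2 * ζ + 3) * pen i (nsz i) + (2 * κ + 1) * c₂ * eps i := by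
    intro i hi j hj hji
    have h1 := mul_le_mul_of_nonneg_left (hpen_nondec i hi j hj hji)
      (show (0:ℝ) ≤ 2 * ζ + 3 by linarith)
    have h2 := mul_le_mul_of_nonneg_left (heps_nondec i hi j hj hji)
      (show (0:ℝ) ≤ (2 * κ + 1) * c₂ from mul_nonneg (by linarith) hc₂.le)
    linarith
  have hB0 : ∀ i ∈ S, 0 ≤ (2 * ζ + 3) * pen i (nsz i) + (2 * κ + 1) * c₂ * eps i := by
    intro i hi
    have h1 := mul_nonneg (show (0:ℝ) ≤ 2 * ζ + 3 by linarith) (hpos i hi)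
    have h2 := mul_nonneg (show (0:ℝ) ≤ (2 * κ + 1) * c₂ from mul_nonneg (by linarith) hc₂.le)
      (heps i).le
    linarith
  have key : ∀ j, j ∈ S → ihat ≤ j →
      R (fhat ihat) ≤ R (fstar j) + (((S.filter (· ≤ j)).card : ℕ) : ℝ) *
        ((2 * ζ + 3) * pen j (nsz j) + (2 * κ + 1) * c₂ * eps j) := by
    intro j
    induction j using Nat.strong_induction_on with
    | _ j ih =>
      intro hj hij
      have hE := hERM j hj (fstar j) (hfstar_mem j)
      rcases hij.eq_or_lt with h | h
      · have h1 := hE1 j hj j hj (fhat j) (hmem j)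
        have hN : (1:ℝ) ≤ (((S.filter (· ≤ j)).card : ℕ) : ℝ) := by
          exact_mod_cast Finset.card_pos.mpr ⟨j, by simp [hj]⟩
        have h2 := mul_le_mul_of_nonneg_right hN (hB0 j hj)
        have h3 := mul_nonneg (show (0:ℝ) ≤ ζ by linarith) (hpos j hj)
        have h4 := mul_nonneg (show (0:ℝ) ≤ κ by linarith) (mul_pos hc₂ (heps j)).le
        subst h
        linarith
      · have hnot : ∃ k ∈ S, k < j ∧ Lhat j (fhat k) + ζ * pen k (nsz k) <
            Lhat j (fhat j) + ζ * pen j (nsz j) + κ * c₂ * eps j := by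
          by_contra hcon
          push Not at hcon
          exact absurd (hihat_max j hj hcon) (by omega)
        obtain ⟨k, hk, hkj, hlt⟩ := hnot
        have h1 := hE1 j hj j hj (fhat k) (hnested k j hkj.le (hmem k))
        have h3 := mul_nonneg (show (0:ℝ) ≤ ζ by linarith) (hpos k hk)
        obtain ⟨m, hm, hmj, him, hkm⟩ : ∃ m ∈ S, m < j ∧ ihat ≤ m ∧ k ≤ m := by
          rcases le_total k ihat with h' | h'
          · exact ⟨ihat, hihat_mem, h, le_rfl, h'⟩
          · exact ⟨k, hk, hkj, h', le_rfl⟩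
        have h5 := ih m hmj hm him
        have h6 := hfstar_min m (fhat k) (hnested k m hkm (hmem k))
        have hN : (((S.filter (· ≤ m)).card : ℕ) : ℝ) + 1 ≤
            (((S.filter (· ≤ j)).card : ℕ) : ℝ) := by
          have : (S.filter (· ≤ m)).card < (S.filter (· ≤ j)).card := by
            apply Finset.card_lt_card
            rw [Finset.ssubset_iff_of_subset]
            · exact ⟨j, by simp [hj], by simp [hmj]⟩
            · intro x hx
              simp only [Finset.mem_filter] at hx ⊢
              exact ⟨hx.1, by omega⟩
          exact_mod_cast this
        have h7 := mul_le_mul_of_nonneg_right hN (hB0 j hj)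
        have h8 := mul_le_mul_of_nonneg_left (hBmono j hj m hm hmj.le)
          (Nat.cast_nonneg (α := ℝ) (S.filter (· ≤ m)).card)
        linarith
  intro j hj hij
  have h1 := key j hj hij
  have hN : (((S.filter (· ≤ j)).card : ℕ) : ℝ) ≤ (s : ℝ) := by
    rw [← hcard]
    exact_mod_cast Finset.card_filter_le _ _
  have h2 := mul_le_mul_of_nonneg_right hN (hB0 j hj)
  linarith
end

section
/- (Deterministic fast-rate transfer lemma.) Suppose the events E1 and E2 hold for all pairs of indices in S. If i, j ∈ S with i ≥ j and L̂ᵢ(f̂ⱼ) + ζ·penⱼ(nⱼ) ≤ L̂ᵢ(f̂ᵢ) + ζ·penᵢ(nᵢ) + κ·c₂·εᵢ, then R(f̂ⱼ) ≤ R(fᵢ*) + (2ζ + 3)·penᵢ(nᵢ) + (2κ + 1)·c₂·εᵢ. -/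
/-- Deterministic fast-rate transfer lemma (Lemma C.3 /
`lemma:nesting-fast-upper-good` of Agarwal–Bartlett–Duchi): under the events
E1 and E2 for all pairs in `S`, if `i ≥ j` and
`L̂ᵢ(f̂ⱼ) + ζ penⱼ(nⱼ) ≤ L̂ᵢ(f̂ᵢ) + ζ penᵢ(nᵢ) + κ c₂ εᵢ`, then
`R(f̂ⱼ) ≤ R(fᵢ*) + (2ζ+3) penᵢ(nᵢ) + (2κ+1) c₂ εᵢ`. -/
theorem stmt10 {F : Type*} (𝓕 : ℕ → Set F)
    (hnested : ∀ i j : ℕ, i ≤ j → 𝓕 i ⊆ 𝓕 j)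
    (R : F → ℝ) (S : Finset ℕ)
    (fstar : ℕ → F) (hfstar_mem : ∀ i, fstar i ∈ 𝓕 i)
    (hfstar_min : ∀ i, ∀ f ∈ 𝓕 i, R (fstar i) ≤ R f)
    (nsz : ℕ → ℕ) (pen : ℕ → ℕ → ℝ)
    (Lhat : ℕ → F → ℝ) (fhat : ℕ → F) (hmem : ∀ i, fhat i ∈ 𝓕 i)
    (hERM : ∀ i ∈ S, ∀ f ∈ 𝓕 i, Lhat i (fhat i) ≤ Lhat i f + pen i (nsz i))
    (eps : ℕ → ℝ) (heps : ∀ i, 0 < eps i)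
    (ζ κ c₂ : ℝ) (hζ : 0 < ζ) (hκ : 0 < κ) (hc₂ : 0 < c₂)
    (hE1 : ∀ i ∈ S, ∀ j ∈ S, ∀ f ∈ 𝓕 j,
      R f - R (fstar j) - 2 * (Lhat i f - Lhat i (fstar j)) ≤ pen j (nsz i) + c₂ * eps i)
    (hE2 : ∀ i ∈ S, ∀ j ∈ S, ∀ f ∈ 𝓕 j,
      Lhat i f - Lhat i (fstar j) - 2 * (R f - R (fstar j)) ≤ pen j (nsz i) + c₂ * eps i)
    (i j : ℕ) (hi : i ∈ S) (hj : j ∈ S) (hij : j ≤ i)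
    (hcond : Lhat i (fhat j) + ζ * pen j (nsz j)
      ≤ Lhat i (fhat i) + ζ * pen i (nsz i) + κ * c₂ * eps i) :
    R (fhat j) ≤ R (fstar i) + (2 * ζ + 3) * pen i (nsz i) + (2 * κ + 1) * c₂ * eps i := by
  have h1 := hE1 i hi i hi (fhat j) (hnested j i hij (hmem j))
  have h2 := hERM i hi (fstar i) (hfstar_mem i)
  have h3 := hERM j hj (fhat j) (hmem j)
  have h4 : 0 ≤ ζ * pen j (nsz j) := mul_nonneg hζ.le (by linarith)
  linarith
end
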